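/- Chebyshev–Bessel representation of exponential divided differences: let x_0,…,x_q ∈ [a,b] be pairwise distinct with a < b, set c = (b−a)/2, d = (a+b)/2, and y_i = (x_i − d)/c. Then exp[x_0,…,x_q] = (e^d · I_0(c)/c^q) · ( T_0[y_0,…,y_q] + 2·Σ_{n=1}^{∞} (I_n(c)/I_0(c)) · T_n[y_0,…,y_q] ), where the series converges absolutely. -/

import Mathlib

/-- Divided difference of order `q` of `f` on nodes `x 0, …, x q`. -/
noncomputable def divDiff (f : ℝ → ℝ) : (q : ℕ) → (Fin (q + 1) → ℝ) → ℝ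
  | 0, x => f (x 0)
  | q + 1, x =>
      (divDiff f q (fun i => x i.succ) - divDiff f q (fun i => x i.castSucc)) /
        (x (Fin.last (q + 1)) - x 0)

/-- Chebyshev polynomial of the first kind, as a real function. -/
noncomputable def chebT (n : ℤ) : ℝ → ℝ := fun y => (Polynomial.Chebyshev.T ℝ n).eval y

/-- Modified Bessel function of the first kind of integer order `n`. -/
noncomputable def besselI (n : ℕ) (c : ℝ) : ℝ :=
  ∑' m : ℕ, (c / 2) ^ (2 * m + n) / (m.factorial * (m + n).factorial)

theorem divDiff_hasSum (g : ℕ → ℝ → ℝ) (f : ℝ → ℝ) (q : ℕ) (x : Fin (q + 1) → ℝ)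
    (h : ∀ i, HasSum (fun n => g n (x i)) (f (x i))) :
    HasSum (fun n => divDiff (g n) q x) (divDiff f q x) := by
  induction q with
  | zero => simpa [divDiff] using h 0
  | succ q ih =>
    simp only [divDiff]
    exact ((ih _ fun i => h i.succ).sub (ih _ fun i => h i.castSucc)).div_const _

theorem divDiff_smul (r : ℝ) (f : ℝ → ℝ) (q : ℕ) (x : Fin (q + 1) → ℝ) :
    divDiff (fun t => r * f t) q x = r * divDiff f q x := by
  induction q with
  | zero => simp [divDiff]
  | succ q ih => simp only [divDiff, ih]; ring

theorem divDiff_sub (f g : ℝ → ℝ) (q : ℕ) (x : Fin (q + 1) → ℝ) :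
    divDiff (fun t => f t - g t) q x = divDiff f q x - divDiff g q x := by
  induction q with
  | zero => simp [divDiff]
  | succ q ih => simp only [divDiff, ih]; ring

theorem divDiff_affine (f : ℝ → ℝ) (c d : ℝ) (q : ℕ) (x y : Fin (q + 1) → ℝ)
    (hxy : ∀ i, x i = c * y i + d) :
    divDiff f q x = divDiff (fun t => f (c * t + d)) q y / c ^ q := by
  induction q with
  | zero => simp [divDiff, hxy]
  | succ q ih =>
    simp only [divDiff]
    rw [ih _ (fun i => y i.succ) fun i => hxy i.succ,
      ih _ (fun i => y i.castSucc) fun i => hxy i.castSucc, hxy, hxy,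
      show c * y (Fin.last (q+1)) + d - (c * y 0 + d) = c * (y (Fin.last (q+1)) - y 0) by ring,
      ← sub_div, div_div, div_div, pow_succ]
    congr 1; ring

theorem bessel_summable (n : ℕ) (c : ℝ) :
    Summable (fun m : ℕ => (c / 2) ^ (2 * m + n) / ((m.factorial : ℝ) * (m + n).factorial)) := by
  have h := (Real.summable_pow_div_factorial ((c/2)^2)).mul_left (|c/2| ^ n)
  refine Summable.of_norm_bounded h fun m => ?_
  have h1 : (1:ℝ) ≤ (m+n).factorial := by exact_mod_cast Nat.factorial_pos _
  have h2 : (0:ℝ) < m.factorial := by exact_mod_cast Nat.factorial_pos _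
  rw [Real.norm_eq_abs, abs_div, abs_pow, abs_mul, Nat.abs_cast, Nat.abs_cast, pow_add, pow_mul,
    sq_abs, mul_comm ((_:ℝ)^m), mul_div_assoc]
  gcongr
  nlinarith

theorem bessel_zero_pos (c : ℝ) (hc : 0 < c) : 0 < besselI 0 c := by
  refine (bessel_summable 0 c).tsum_pos (fun m => by positivity) 0 (by positivity)

/-- Pairs of naturals as (difference, minimum). -/
def diffMin : ℤ × ℕ ≃ ℕ × ℕ where
  toFun p := (p.2 + p.1.toNat, p.2 + (-p.1).toNat)
  invFun p := ((p.1 : ℤ) - p.2, min p.1 p.2)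
  left_inv p := by ext <;> simp <;> omega
  right_inv p := by ext <;> simp <;> omega

theorem hasSum_congr_aux {ι : Type} {f g : ι → ℝ} {a : ℝ} (h : ∀ i, f i = g i)
    (hg : HasSum g a) : HasSum f a := (funext h : f = g) ▸ hg

theorem exp_hasSum_aux (z : ℂ) :
    HasSum (fun n : ℕ => z ^ n / (n.factorial : ℂ)) (Complex.exp z) := by
  have := NormedSpace.expSeries_div_hasSum_exp z
  rwa [← Complex.exp_eq_exp_ℂ] at this

theorem hasSum_mul_aux (f g : ℕ → ℂ) (a b : ℂ) (hf : HasSum f a) (hg : HasSum g b) :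
    HasSum (fun p : ℕ × ℕ => f p.1 * g p.2) (a * b) := by
  have h1 : Summable fun n => ‖f n‖ := hf.summable.norm
  have h2 : Summable fun n => ‖g n‖ := hg.summable.norm
  have h3 : Summable fun p : ℕ × ℕ => f p.1 * g p.2 := summable_mul_of_summable_norm h1 h2
  exact HasSum.mul hf hg h3

theorem exp_hasSum_mul_aux (u v : ℂ) :
    HasSum (fun p : ℕ × ℕ => u ^ p.1 / (p.1.factorial : ℂ) * (v ^ p.2 / (p.2.factorial : ℂ)))
      (Complex.exp (u + v)) := by
  rw [Complex.exp_add]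
  have h := hasSum_mul_aux (fun n : ℕ => u ^ n / (n.factorial : ℂ))
    (fun n : ℕ => v ^ n / (n.factorial : ℂ)) (Complex.exp u) (Complex.exp v)
    (exp_hasSum_aux u) (exp_hasSum_aux v)
  exact h

theorem hasSum_prod_cos (c θ : ℝ) :
    HasSum (fun p : ℕ × ℕ => (c/2) ^ (p.1 + p.2) / ((p.1.factorial : ℝ) * p.2.factorial) *
      Real.cos (((p.1 : ℤ) - p.2 : ℤ) * θ)) (Real.exp (c * Real.cos θ)) := by
  set u : ℂ := (c/2 : ℝ) * Complex.exp (θ * Complex.I) with hu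
  set v : ℂ := (c/2 : ℝ) * Complex.exp (-(θ * Complex.I)) with hv
  have h := exp_hasSum_mul_aux u v
  have huv : u + v = ((c * Real.cos θ : ℝ) : ℂ) := by
    rw [hu, hv]; push_cast; rw [Complex.cos]; rw [neg_mul]; ring
  rw [huv, ← Complex.ofReal_exp] at h
  have h2 := Complex.hasSum_re h
  rw [Complex.ofReal_re] at h2
  refine hasSum_congr_aux (fun p => ?_) h2
  have : u ^ p.1 / (p.1.factorial : ℂ) * (v ^ p.2 / (p.2.factorial : ℂ)) =
      (((c/2) ^ (p.1 + p.2) / ((p.1.factorial : ℝ) * p.2.factorial) : ℝ) : ℂ) *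
        Complex.exp (((((p.1 : ℤ) - p.2 : ℤ) * θ : ℝ) : ℂ) * Complex.I) := by
    have e : Complex.exp (((((p.1 : ℤ) - p.2 : ℤ) * θ : ℝ) : ℂ) * Complex.I) =
        Complex.exp (θ * Complex.I) ^ p.1 * Complex.exp (-(θ * Complex.I)) ^ p.2 := by
      rw [← Complex.exp_nat_mul, ← Complex.exp_nat_mul, ← Complex.exp_add]
      congr 1; push_cast; ring
    rw [e, hu, hv, mul_pow, mul_pow]; push_cast; ring
  rw [this, Complex.re_ofReal_mul, Complex.exp_ofReal_mul_I_re]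

theorem hasSum_val {f : ℕ → ℝ} {a b : ℝ} (h : b = a) (hf : HasSum f b) : HasSum f a := h ▸ hf

theorem hasSum_cheb (c y : ℝ) (hy : y ∈ Set.Icc (-1:ℝ) 1) :
    HasSum (fun n : ℕ => 2 * (besselI (n+1) c * chebT (n+1) y))
      (Real.exp (c * y) - besselI 0 c * chebT 0 y) := by
  obtain ⟨θ, rfl⟩ : ∃ θ, y = Real.cos θ := ⟨_, (Real.cos_arccos hy.1 hy.2).symm⟩
  have h := (diffMin.hasSum_iff).2 (hasSum_prod_cos c θ)
  have hZ : HasSum (fun n : ℤ => besselI n.natAbs c * Real.cos (n * θ))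
      (Real.exp (c * Real.cos θ)) := by
    refine h.prod_fiberwise fun n => ?_
    have := (bessel_summable n.natAbs c).hasSum.mul_right (Real.cos (n * θ))
    refine hasSum_congr_aux (fun m => ?_) this
    have e3 : ((m + n.toNat : ℕ) : ℤ) - ((m + (-n).toNat : ℕ) : ℤ) = n := by omega
    simp only [Function.comp, diffMin, Equiv.coe_fn_mk, e3]
    rcases le_total 0 n with hn | hn
    · have e1 : n.toNat = n.natAbs := by omega
      have e2 : (-n).toNat = 0 := by omega
      rw [e1, e2, add_zero, mul_comm (m.factorial : ℝ)]
      congr 3; ring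
    · have e1 : n.toNat = 0 := by omega
      have e2 : (-n).toNat = n.natAbs := by omega
      rw [e1, e2, add_zero]
      congr 3; ring
  have hN := hZ.nat_add_neg
  have hN2 := (hasSum_nat_add_iff' 1).2 hN
  rw [Finset.sum_range_one] at hN2
  refine hasSum_val ?_ (hasSum_congr_aux (fun n => ?_) hN2)
  rotate_left
  · have e : ((n:ℤ) + 1).natAbs = n + 1 := by omega
    have e' : (-1 + -(n:ℤ)).natAbs = n + 1 := by omega
    have e4 : (Polynomial.Chebyshev.T ℝ ((n:ℤ)+1)).eval (Real.cos θ) = Real.cos (((n:ℝ)+1)*θ) := by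
      rw [Polynomial.Chebyshev.T_real_cos]; push_cast; rfl
    have e5 : Real.cos ((-((n:ℝ)+1))*θ) = Real.cos (((n:ℝ)+1)*θ) := by
      rw [neg_mul, Real.cos_neg]
    simp only [chebT, e4]
    push_cast
    rw [e5, Int.natAbs_neg, e]; ring
  · simp [chebT]

/-- Chebyshev–Bessel representation of exponential divided differences. -/
theorem exp_divDiff_chebyshev_bessel (q : ℕ) (a b : ℝ) (hab : a < b)
    (x : Fin (q + 1) → ℝ) (hx : Function.Injective x)
    (hmem : ∀ i, x i ∈ Set.Icc a b) :
    let c := (b - a) / 2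
    let d := (a + b) / 2
    let y : Fin (q + 1) → ℝ := fun i => (x i - d) / c
    Summable (fun n : ℕ => |(besselI (n + 1) c / besselI 0 c) * divDiff (chebT (n + 1)) q y|) ∧
    divDiff Real.exp q x =
      Real.exp d * besselI 0 c / c ^ q *
        (divDiff (chebT 0) q y +
          2 * ∑' n : ℕ, (besselI (n + 1) c / besselI 0 c) * divDiff (chebT (n + 1)) q y) := by
  intro c d y
  have hc : 0 < c := by simp only [c]; linarith
  have hI := bessel_zero_pos c hc
  have hxy : ∀ i, x i = c * y i + d := fun i => by simp only [y]; field_simp; ring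
  have hy : ∀ i, y i ∈ Set.Icc (-1:ℝ) 1 := by
    intro i
    have h1 := hmem i
    simp only [y, Set.mem_Icc]
    rw [le_div_iff₀ hc, div_le_iff₀ hc]
    simp only [c, d]
    constructor <;> linarith [h1.1, h1.2]
  have H := divDiff_hasSum (fun n t => 2 * (besselI (n+1) c * chebT (n+1) t))
    (fun t => Real.exp (c * t) - besselI 0 c * chebT 0 t) q y (fun i => hasSum_cheb c (y i) (hy i))
  simp only [divDiff_smul, divDiff_sub] at H
  have H2 := H.div_const (2 * besselI 0 c)
  have H3 : HasSum (fun n : ℕ => (besselI (n + 1) c / besselI 0 c) * divDiff (chebT (n + 1)) q y)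
      ((divDiff (fun t => Real.exp (c * t)) q y - besselI 0 c * divDiff (chebT 0) q y)
        / (2 * besselI 0 c)) := by
    refine hasSum_congr_aux (fun n => ?_) H2
    field_simp
  refine ⟨H3.summable.abs, ?_⟩
  rw [H3.tsum_eq, divDiff_affine Real.exp c d q x y hxy]
  have : (fun t => Real.exp (c * t + d)) = fun t => Real.exp d * Real.exp (c * t) := by
    funext t; rw [Real.exp_add, mul_comm]
  rw [this, divDiff_smul]
  field_simp
  ring
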